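/- Let p be a prime, K a finite extension of ℚ_p, E/K a quadratic field extension with nontrivial K-automorphism τ, and let (V,φ) and (V',φ') be nondegenerate Hermitian spaces over E of the same odd dimension n = 2m+1. Then there exists an E-linear isomorphism g : V → V' such that conjugation f ↦ g ∘ f ∘ g⁻¹ carries the unitary group U(V,φ) = {f ∈ GL_E(V) : φ(f v, f w) = φ(v,w) for all v,w} onto U(V',φ'). In particular U(V,φ) and U(V',φ') are isomorphic as groups. -/

import Mathlib

section Squares

/-- If a commutative group without `2`-torsion embeds with finite index, then the ambient number
of square classes is governed by the `2`-torsion of the ambient group. -/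
@[to_additive]
theorem index_range_powMonoidHom_two_of_injective {A B : Type*} [CommGroup A] [CommGroup B]
    (f : B →* A) (hf : Function.Injective f) (hfin : f.range.index ≠ 0)
    (hB : Function.Injective (powMonoidHom 2 : B →* B)) :
    (powMonoidHom 2 : A →* A).range.index =
      (powMonoidHom 2 : B →* B).range.index * Nat.card (powMonoidHom 2 : A →* A).ker := by
  set s : A →* A := powMonoidHom 2
  set t : B →* B := powMonoidHom 2
  have hcomm : s.comp f = f.comp t := by ext b; simp [s, t]
  have h1 : (f.range.map s).index = t.range.index * f.range.index := by
    rw [← MonoidHom.range_comp, hcomm, MonoidHom.range_comp, Subgroup.index_map_of_injective _ hf]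
  have h2 := Subgroup.index_map (H := f.range) s
  have h3 : f.range.relIndex (f.range ⊔ s.ker) = Nat.card s.ker := by
    rw [Subgroup.relIndex_sup_left, Subgroup.relIndex, ← Subgroup.index_bot]
    congr 1
    rw [eq_bot_iff]
    rintro ⟨x, hx⟩ hxf
    obtain ⟨b, rfl⟩ := Subgroup.mem_subgroupOf.mp hxf
    have hb : f (t b) = 1 := by
      have := DFunLike.congr_fun hcomm b
      simp only [MonoidHom.comp_apply] at this
      rw [← this]; exact hx
    have hb1 : b = 1 := hB (by
      change t b = t 1
      rw [map_one]; exact hf (by rw [hb, map_one]))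
    simp [hb1]
  have h4 := Subgroup.relIndex_mul_index (le_sup_left : f.range ≤ f.range ⊔ s.ker)
  rw [h3] at h4
  have h5 : (f.range ⊔ s.ker).index ≠ 0 := by
    intro h; rw [h, mul_zero] at h4; exact hfin h4.symm
  rw [h1, ← h4] at h2
  apply mul_left_cancel₀ h5
  rw [← h2]; ring

theorem index_range_powMonoidHom_two_prod (A B : Type*) [CommGroup A] [CommGroup B] :
    (powMonoidHom 2 : A × B →* A × B).range.index =
      (powMonoidHom 2 : A →* A).range.index * (powMonoidHom 2 : B →* B).range.index := by
  rw [← Subgroup.index_prod]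
  congr 1
  ext ⟨a, b⟩
  simp [Subgroup.mem_prod, MonoidHom.mem_range]

theorem AddSubgroup.index_range_nsmulAddMonoidHom_two_prod (A B : Type*)
    [AddCommGroup A] [AddCommGroup B] :
    (nsmulAddMonoidHom 2 : A × B →+ A × B).range.index =
      (nsmulAddMonoidHom 2 : A →+ A).range.index *
        (nsmulAddMonoidHom 2 : B →+ B).range.index := by
  rw [← AddSubgroup.index_prod]
  congr 1
  ext ⟨a, b⟩
  simp [AddSubgroup.mem_prod, AddMonoidHom.mem_range]

/-- Let `i : G → H` be a homomorphism of commutative groups and `ν : H → G` a norm map satisfying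
a weak form of Hilbert 90. Counting square classes then bounds the index of the norm group. -/
theorem index_range_norm {G H : Type*} [CommGroup G] [CommGroup H]
    (i : G →* H) (ν : H →* G) (hνi : ∀ a, ν (i a) = a ^ 2)
    (hker : ∀ x c, ν x = c ^ 2 → ∃ a y, x = i a * y ^ 2)
    (d : G) (hd : ∀ a, d ≠ a ^ 2) (hdH : ∃ y, i d = y ^ 2)
    (hfin : (powMonoidHom 2 : G →* G).range.index ≠ 0)
    (hcard : 4 * (powMonoidHom 2 : H →* H).range.index =
      (powMonoidHom 2 : G →* G).range.index ^ 2) :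
    ν.range.index = 1 ∨ ν.range.index = 2 := by
  set s : Subgroup G := (powMonoidHom 2 : G →* G).range
  set t : Subgroup H := (powMonoidHom 2 : H →* H).range
  have hM : s.comap ν = i.range ⊔ t := by
    apply le_antisymm
    · rintro x ⟨c, hc⟩
      obtain ⟨a, y, rfl⟩ := hker x c hc.symm
      exact Subgroup.mul_mem_sup ⟨a, rfl⟩ ⟨y, rfl⟩
    · refine sup_le ?_ ?_
      · rintro _ ⟨a, rfl⟩
        exact ⟨a, (hνi a).symm⟩
      · rintro _ ⟨y, rfl⟩
        exact ⟨ν y, by simp⟩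
  have h1 : (i.range ⊔ t).index = s.relIndex ν.range := by rw [← hM, Subgroup.index_comap]
  have h2 := Subgroup.relIndex_mul_index (le_sup_right : t ≤ i.range ⊔ t)
  rw [Subgroup.relIndex_sup_right, ← Subgroup.index_comap, h1] at h2
  have hst : s ≤ t.comap i := by
    rintro _ ⟨a, rfl⟩
    exact ⟨i a, by simp⟩
  have hsν : s ≤ ν.range := by
    rintro _ ⟨a, rfl⟩
    exact ⟨i a, hνi a⟩
  have h3 := Subgroup.relIndex_mul_index hst
  have h4 := Subgroup.relIndex_mul_index hsν
  have h5 : s.relIndex (t.comap i) ≠ 1 := by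
    rw [Ne, Subgroup.relIndex_eq_one]
    intro hle
    obtain ⟨y, hy⟩ := hdH
    obtain ⟨a, ha⟩ := hle (show d ∈ t.comap i from ⟨y, hy.symm⟩)
    exact hd a ha.symm
  generalize s.relIndex (t.comap i) = k at *
  generalize (t.comap i).index = u at *
  generalize s.relIndex ν.range = v at *
  generalize ν.range.index = w at *
  generalize s.index = c at *
  have hk : 2 ≤ k := by
    rcases k with _ | _ | k
    · simp at h3; omega
    · simp at h5
    · omega
  have hu : 0 < u := Nat.pos_of_ne_zero (by rintro rfl; simp at h3; omega)
  have hv : 0 < v := Nat.pos_of_ne_zero (by rintro rfl; simp at h4; omega)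
  rw [← h2] at hcard
  have h6 : 4 * (u * v) = (k * u) * (v * w) := by rw [hcard, h3, h4, sq]
  have h7 : 4 = k * w := by
    apply Nat.eq_of_mul_eq_mul_right (Nat.mul_pos hu hv)
    rw [h6]; ring
  have hw : w ≤ 2 := by nlinarith
  have hw0 : w ≠ 0 := by rintro rfl; simp at h7
  omega

end Squares
section LocalSquares

open Metric

variable {K : Type*} [NontriviallyNormedField K] [IsUltrametricDist K]

theorem index_range_powMonoidHom_two_int :
    (powMonoidHom 2 : Multiplicative ℤ →* Multiplicative ℤ).range.index = 2 := by
  rw [Subgroup.index_eq_two_iff]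
  refine ⟨Multiplicative.ofAdd 1, fun b => ?_⟩
  have key : ∀ n : ℤ, Multiplicative.ofAdd n ∈
      (powMonoidHom 2 : Multiplicative ℤ →* Multiplicative ℤ).range ↔ Even n := by
    intro n
    constructor
    · rintro ⟨m, hm⟩
      refine ⟨m.toAdd, ?_⟩
      have := congrArg Multiplicative.toAdd hm
      simp at this
      omega
    · rintro ⟨m, rfl⟩
      exact ⟨Multiplicative.ofAdd m, by simp [pow_two]⟩
  have h1 := key b.toAdd
  have h2 := key (b.toAdd + 1)
  rw [ofAdd_add] at h2
  simp only [ofAdd_toAdd] at h1 h2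
  rw [h1, h2, Int.even_add_one]
  grind

/-- Hensel's lemma for the polynomial `T² + T - z`. -/
theorem exists_sq_add_self_eq [CompleteSpace K] {z : K} (hz : ‖z‖ < 1) :
    ∃ t : K, ‖t‖ ≤ ‖z‖ ∧ t ^ 2 + t = z := by
  have hmaps : Set.MapsTo (fun t : K => z - t ^ 2) (closedBall 0 ‖z‖) (closedBall 0 ‖z‖) := by
    intro t ht
    rw [mem_closedBall_zero_iff] at ht ⊢
    change ‖z - t ^ 2‖ ≤ ‖z‖
    rw [sub_eq_add_neg]
    refine (IsUltrametricDist.norm_add_le_max _ _).trans (max_le le_rfl ?_)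
    rw [norm_neg, norm_pow]
    nlinarith [norm_nonneg t, norm_nonneg z]
  have hcontr : ContractingWith ⟨‖z‖, norm_nonneg z⟩ (hmaps.restrict _ _ _) := by
    refine ⟨by exact_mod_cast hz, LipschitzWith.of_dist_le_mul ?_⟩
    rintro ⟨x, hx⟩ ⟨y, hy⟩
    rw [mem_closedBall_zero_iff] at hx hy
    simp only [Subtype.dist_eq, Set.MapsTo.val_restrict_apply, dist_eq_norm]
    have : z - x ^ 2 - (z - y ^ 2) = -(x + y) * (x - y) := by ring
    rw [this, norm_mul, norm_neg]
    exact mul_le_mul_of_nonneg_right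
      ((IsUltrametricDist.norm_add_le_max _ _).trans (max_le hx hy)) (norm_nonneg _)
  obtain ⟨t, ht, hfix, -⟩ := hcontr.exists_fixedPoint' isClosed_closedBall.isComplete hmaps
    (x := 0) (by simp) (edist_ne_top _ _)
  refine ⟨t, mem_closedBall_zero_iff.mp ht, ?_⟩
  have : z - t ^ 2 = t := hfix
  linear_combination -this

theorem exists_sq_eq_one_add [CompleteSpace K] (h2 : (2 : K) ≠ 0) {r : ℝ} (hr : r < ‖(2 : K)‖)
    {u : K} (hu : ‖u‖ ≤ ‖(2 : K)‖ * r) : ∃ w : K, ‖w‖ ≤ r ∧ (1 + w) ^ 2 = 1 + u := by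
  have h2pos : 0 < ‖(2 : K)‖ := norm_pos_iff.mpr h2
  have hz : ‖u / 4‖ ≤ r / ‖(2 : K)‖ := by
    rw [show (4 : K) = 2 * 2 by norm_num, norm_div, norm_mul, div_le_div_iff₀ (by positivity) h2pos]
    nlinarith
  obtain ⟨t, ht, hteq⟩ := exists_sq_add_self_eq (hz.trans_lt ((div_lt_one h2pos).mpr hr))
  refine ⟨2 * t, ?_, ?_⟩
  · rw [norm_mul, mul_comm]
    exact (le_div_iff₀ h2pos).mp (ht.trans hz)
  · have h4 : (4 : K) ≠ 0 := by
      rw [show (4 : K) = 2 * 2 by norm_num]; exact mul_ne_zero h2 h2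
    field_simp at hteq
    linear_combination hteq

variable (K) in
/-- The closed ball of radius `r` as an additive subgroup. -/
def ballAddSubgroup (r : ℝ) (hr : 0 ≤ r) : AddSubgroup K where
  carrier := {x | ‖x‖ ≤ r}
  zero_mem' := by simpa using hr
  add_mem' hx hy := (IsUltrametricDist.norm_add_le_max _ _).trans (max_le hx hy)
  neg_mem' {x} hx := by simpa using hx

theorem mem_ballAddSubgroup {r : ℝ} {hr : 0 ≤ r} {x : K} :
    x ∈ ballAddSubgroup K r hr ↔ ‖x‖ ≤ r := Iff.rfl

theorem norm_eq_one_of_norm_sub_one_lt {x : K} (hx : ‖x - 1‖ < 1) : ‖x‖ = 1 := by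
  have h := IsUltrametricDist.norm_add_eq_max_of_norm_ne_norm (x := x - 1) (y := 1)
    (by rw [norm_one]; exact hx.ne)
  rw [sub_add_cancel, norm_one, max_eq_right hx.le] at h
  exact h

variable (K) in
/-- The units at distance at most `r < 1` from `1` form a subgroup. -/
def unitBall (r : ℝ) (hr : 0 ≤ r) (hr1 : r < 1) : Subgroup Kˣ where
  carrier := {x | ‖(x : K) - 1‖ ≤ r}
  one_mem' := by simpa using hr
  mul_mem' {x y} hx hy := by
    simp only [Set.mem_ofPred_eq, Units.val_mul] at hx hy ⊢
    have h : (x : K) * y - 1 = x * (y - 1) + (x - 1) := by ring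
    rw [h]
    refine (IsUltrametricDist.norm_add_le_max _ _).trans (max_le ?_ hx)
    rw [norm_mul, norm_eq_one_of_norm_sub_one_lt (hx.trans_lt hr1), one_mul]
    exact hy
  inv_mem' {x} hx := by
    simp only [Set.mem_ofPred_eq, Units.val_inv_eq_inv_val] at hx ⊢
    have h : (x : K)⁻¹ - 1 = -((x : K)⁻¹ * (x - 1)) := by
      rw [mul_sub, inv_mul_cancel₀ x.ne_zero]; ring
    rw [h, norm_neg, norm_mul, norm_inv, norm_eq_one_of_norm_sub_one_lt (hx.trans_lt hr1)]
    simpa using hx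

theorem mem_unitBall {r : ℝ} {hr : 0 ≤ r} {hr1 : r < 1} {x : Kˣ} :
    x ∈ unitBall K r hr hr1 ↔ ‖(x : K) - 1‖ ≤ r := Iff.rfl

theorem norm_of_mem_unitBall {r : ℝ} {hr : 0 ≤ r} {hr1 : r < 1} {x : Kˣ}
    (hx : x ∈ unitBall K r hr hr1) : ‖(x : K)‖ = 1 :=
  norm_eq_one_of_norm_sub_one_lt ((mem_unitBall.mp hx).trans_lt hr1)

theorem norm_two_le_one : ‖(2 : K)‖ ≤ 1 := by
  exact_mod_cast IsUltrametricDist.norm_natCast_le_one K 2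

theorem mem_range_powMonoidHom_unitBall [CompleteSpace K] (h2 : (2 : K) ≠ 0) {r : ℝ} {hr : 0 ≤ r}
    {hr1 : r < 1} (hr2 : r < ‖(2 : K)‖) (x : unitBall K r hr hr1) :
    x ∈ (powMonoidHom 2 : unitBall K r hr hr1 →* unitBall K r hr hr1).range ↔
      ‖((x : Kˣ) : K) - 1‖ ≤ ‖(2 : K)‖ * r := by
  constructor
  · rintro ⟨⟨y, hy⟩, rfl⟩
    rw [mem_unitBall] at hy
    have h : (y : K) ^ 2 - 1 = (y - 1) * ((y - 1) + 2) := by ring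
    simp only [powMonoidHom_apply, SubmonoidClass.mk_pow, Units.val_pow_eq_pow_val]
    rw [h, norm_mul, mul_comm]
    exact mul_le_mul ((IsUltrametricDist.norm_add_le_max _ _).trans
      (max_le (hy.trans hr2.le) le_rfl)) hy (norm_nonneg _) (norm_nonneg _)
  · intro hx
    obtain ⟨w, hw, hsq⟩ := exists_sq_eq_one_add h2 hr2 hx
    have hne : 1 + w ≠ 0 := by
      intro h
      rw [h] at hsq
      have : ((x : Kˣ) : K) = 0 := by linear_combination -hsq
      exact Units.ne_zero _ this
    refine ⟨⟨Units.mk0 (1 + w) hne, ?_⟩, ?_⟩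
    · rw [mem_unitBall]; simpa using hw
    · ext
      simp [hsq]

theorem mem_range_nsmul_ballAddSubgroup (h2 : (2 : K) ≠ 0) {r : ℝ} {hr : 0 ≤ r}
    (x : ballAddSubgroup K r hr) :
    x ∈ (nsmulAddMonoidHom 2 : ballAddSubgroup K r hr →+ ballAddSubgroup K r hr).range ↔
      ‖(x : K)‖ ≤ ‖(2 : K)‖ * r := by
  have h2pos : 0 < ‖(2 : K)‖ := norm_pos_iff.mpr h2
  constructor
  · rintro ⟨⟨y, hy⟩, rfl⟩
    rw [mem_ballAddSubgroup] at hy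
    simp only [nsmulAddMonoidHom_apply, AddSubgroup.coe_nsmul, nsmul_eq_mul, Nat.cast_ofNat,
      norm_mul]
    gcongr
  · intro hx
    refine ⟨⟨(x : K) / 2, ?_⟩, ?_⟩
    · rw [mem_ballAddSubgroup, norm_div, div_le_iff₀ h2pos, mul_comm]
      exact hx
    · ext
      simp only [nsmulAddMonoidHom_apply, AddSubgroup.coe_nsmul, nsmul_eq_mul, Nat.cast_ofNat]
      field_simp

theorem index_range_powMonoidHom_unitBall [CompleteSpace K] (h2 : (2 : K) ≠ 0) {r : ℝ} {hr : 0 ≤ r}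
    {hr1 : r < 1} (hr2 : r < ‖(2 : K)‖) :
    (powMonoidHom 2 : unitBall K r hr hr1 →* unitBall K r hr hr1).range.index =
      (nsmulAddMonoidHom 2 : ballAddSubgroup K r hr →+ ballAddSubgroup K r hr).range.index := by
  let e : unitBall K r hr hr1 ≃ ballAddSubgroup K r hr :=
    { toFun x := ⟨((x : Kˣ) : K) - 1, x.2⟩
      invFun y := ⟨Units.mk0 (1 + (y : K)) (by
        intro h
        have hy : ‖(y : K)‖ ≤ r := y.2
        rw [eq_neg_of_add_eq_zero_right h, norm_neg, norm_one] at hy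
        linarith), by rw [mem_unitBall]; simpa using mem_ballAddSubgroup.mp y.2⟩
      left_inv x := by ext; simp
      right_inv y := by ext; simp }
  refine Nat.card_congr (Quotient.congr e fun x y => ?_)
  rw [QuotientGroup.leftRel_apply, QuotientAddGroup.leftRel_apply,
    mem_range_powMonoidHom_unitBall h2 hr2, mem_range_nsmul_ballAddSubgroup h2]
  have h : (((x⁻¹ * y : unitBall K r hr hr1) : Kˣ) : K) - 1 =
      ((x : Kˣ) : K)⁻¹ * (((-e x + e y : ballAddSubgroup K r hr)) : K) := by
    simp [e]
    field_simp
  rw [h, norm_mul, norm_inv, norm_of_mem_unitBall x.2, inv_one, one_mul]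

theorem index_ne_zero_of_isOpen_ballAddSubgroup [ProperSpace K] {r : ℝ} (hr : 0 ≤ r)
    (L : AddSubgroup (ballAddSubgroup K r hr)) (hL : IsOpen (L : Set (ballAddSubgroup K r hr))) :
    L.index ≠ 0 := by
  have hball : (ballAddSubgroup K r hr : Set K) = closedBall 0 r := by
    ext x; simp [mem_ballAddSubgroup]
  have : CompactSpace (ballAddSubgroup K r hr) :=
    isCompact_iff_compactSpace.mp (hball ▸ isCompact_closedBall 0 r)
  have := L.quotient_finite_of_isOpen hL
  exact AddSubgroup.index_ne_zero_of_finite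

theorem index_range_nsmul_ballAddSubgroup_ne_zero [ProperSpace K] (h2 : (2 : K) ≠ 0) {r : ℝ}
    (hr : 0 < r) :
    (nsmulAddMonoidHom 2 :
      ballAddSubgroup K r hr.le →+ ballAddSubgroup K r hr.le).range.index ≠ 0 := by
  apply index_ne_zero_of_isOpen_ballAddSubgroup
  have h2r : ‖(2 : K)‖ * r ≠ 0 := mul_ne_zero (norm_ne_zero_iff.mpr h2) hr.ne'
  convert (IsUltrametricDist.isOpen_closedBall (0 : K) h2r).preimage
    (continuous_subtype_val (p := fun x => x ∈ ballAddSubgroup K r hr.le)) using 1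
  ext x
  rw [SetLike.mem_coe, mem_range_nsmul_ballAddSubgroup h2]
  simp

/-- The subgroup generated by `ϖ` and a small ball around `1` has finite index. -/
theorem index_range_zpowers_coprod_unitBall_ne_zero [ProperSpace K] (ϖ : Kˣ) (hϖ : ‖(ϖ : K)‖ < 1)
    {r : ℝ} (hr : 0 < r) (hr1 : r < 1) :
    ((zpowersHom Kˣ ϖ).coprod (unitBall K r hr.le hr1).subtype).range.index ≠ 0 := by
  set F := (zpowersHom Kˣ ϖ).coprod (unitBall K r hr.le hr1).subtype
  have hϖ0 : 0 < ‖(ϖ : K)‖ := norm_pos_iff.mpr ϖ.ne_zero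
  obtain ⟨t, htfin, ht⟩ := Metric.totallyBounded_iff.mp
    (isCompact_closedBall (0 : K) 1).totallyBounded (r * ‖(ϖ : K)‖) (by positivity)
  have hfin : Finite (Kˣ ⧸ F.range) := by
    have : Finite ((fun y : Kˣ => (y : K)) ⁻¹' t) :=
      (htfin.preimage Units.val_injective.injOn).to_subtype
    refine Finite.of_surjective
      (fun y : (fun y : Kˣ => (y : K)) ⁻¹' t => (QuotientGroup.mk (y : Kˣ) : Kˣ ⧸ F.range)) ?_
    intro q
    obtain ⟨x, rfl⟩ := QuotientGroup.mk_surjective q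
    obtain ⟨n, hn1, hn2⟩ := exists_mem_Ioc_zpow (norm_pos_iff.mpr x.ne_zero)
      ((one_lt_inv₀ hϖ0).mpr hϖ)
    set z : Kˣ := x * ϖ ^ (n + 1) with hz
    have hznorm : ‖(z : K)‖ = ‖(x : K)‖ * ‖(ϖ : K)‖ ^ (n + 1) := by
      simp [hz]
    have hz1 : ‖(z : K)‖ ≤ 1 := by
      rw [hznorm]
      rw [inv_zpow, ← one_div, le_div_iff₀ (by positivity)] at hn2
      exact hn2
    have hz2 : ‖(ϖ : K)‖ < ‖(z : K)‖ := by
      rw [hznorm, zpow_add_one₀ hϖ0.ne', ← mul_assoc]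
      rw [inv_zpow, ← one_div, div_lt_iff₀ (by positivity)] at hn1
      exact lt_mul_of_one_lt_left hϖ0 hn1
    obtain ⟨y, hyt, hy⟩ := Set.mem_iUnion₂.mp (ht (mem_closedBall_zero_iff.mpr hz1))
    rw [mem_ball, dist_eq_norm] at hy
    have hyz : ‖(z : K) - y‖ < ‖(z : K)‖ := by nlinarith
    have hy0 : y ≠ 0 := by
      rintro rfl
      simp at hyz
    refine ⟨⟨Units.mk0 y hy0, hyt⟩, ?_⟩
    have hmem : (Units.mk0 y hy0)⁻¹ * z ∈ unitBall K r hr.le hr1 := by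
      have h : y⁻¹ * (z : K) - 1 = y⁻¹ * (z - y) := by field_simp
      have hnorm : ‖y‖ = ‖(z : K)‖ := by
        have := IsUltrametricDist.norm_add_eq_max_of_norm_ne_norm (x := (z : K)) (y := y - z)
          (by rw [norm_sub_rev]; exact hyz.ne')
        rwa [add_sub_cancel, norm_sub_rev, max_eq_left hyz.le] at this
      rw [mem_unitBall, Units.val_mul, Units.val_inv_eq_inv_val, Units.val_mk0, h, norm_mul,
        norm_inv, hnorm, inv_mul_le_iff₀ (hϖ0.trans hz2)]
      nlinarith
    refine QuotientGroup.eq.mpr ⟨(Multiplicative.ofAdd (-(n + 1)), ⟨_, hmem⟩), ?_⟩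
    simp only [F, MonoidHom.coprod_apply, zpowersHom_apply, Subgroup.subtype_apply, hz,
      toAdd_ofAdd, zpow_neg]
    rw [inv_mul_eq_iff_eq_mul]
    ac_rfl
  exact Subgroup.index_ne_zero_of_finite

theorem injective_zpowers_coprod_unitBall (ϖ : Kˣ) (hϖ : ‖(ϖ : K)‖ < 1)
    {r : ℝ} (hr : 0 ≤ r) (hr1 : r < 1) :
    Function.Injective ((zpowersHom Kˣ ϖ).coprod (unitBall K r hr hr1).subtype) := by
  have hϖ0 : 0 < ‖(ϖ : K)‖ := norm_pos_iff.mpr ϖ.ne_zero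
  rw [injective_iff_map_eq_one]
  rintro ⟨k, u⟩ h
  simp only [MonoidHom.coprod_apply, zpowersHom_apply, Subgroup.subtype_apply] at h
  have hn := congrArg (fun x : Kˣ => ‖(x : K)‖) h
  simp only [Units.val_mul, norm_mul, Units.val_zpow_eq_zpow_val, norm_zpow,
    norm_of_mem_unitBall u.2, mul_one, Units.val_one, norm_one] at hn
  have hk : k.toAdd = 0 := (zpow_eq_one_iff_right₀ hϖ0.le hϖ.ne).mp hn
  rw [hk, zpow_zero, one_mul] at h
  exact Prod.ext (by exact hk) (Subtype.ext h)

theorem injective_powMonoidHom_two_unitBall {r : ℝ} (hr : 0 ≤ r)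
    (hr1 : r < 1) (hr2 : r < ‖(2 : K)‖) :
    Function.Injective (powMonoidHom 2 : unitBall K r hr hr1 →* unitBall K r hr hr1) := by
  rw [injective_iff_map_eq_one]
  rintro ⟨u, hu⟩ h
  have h1 : (u : K) ^ 2 = 1 := by
    have := congrArg (fun x : unitBall K r hr hr1 => ((x : Kˣ) : K)) h
    simpa using this
  rcases sq_eq_sq_iff_eq_or_eq_neg.mp (h1.trans (one_pow 2).symm) with h | h
  · ext; simpa using h
  · rw [mem_unitBall, h, show (-1 - 1 : K) = -2 by ring, norm_neg] at hu
    linarith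

theorem card_ker_powMonoidHom_two_units {F : Type*} [Field F] (h2 : (2 : F) ≠ 0) :
    Nat.card (powMonoidHom 2 : Fˣ →* Fˣ).ker = 2 := by
  have hne : (1 : Fˣ) ≠ -1 := by
    intro h
    have := congrArg (fun x : Fˣ => (x : F)) h
    simp only [Units.val_one, Units.val_neg] at this
    exact h2 (by linear_combination this)
  have hset : ((powMonoidHom 2 : Fˣ →* Fˣ).ker : Set Fˣ) = {1, -1} := by
    ext x
    simp only [SetLike.mem_coe, MonoidHom.mem_ker, powMonoidHom_apply, Set.mem_insert_iff,
      Set.mem_singleton_iff, Units.ext_iff, Units.val_pow_eq_pow_val, Units.val_one, Units.val_neg]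
    rw [← sq_eq_sq_iff_eq_or_eq_neg, one_pow]
  rw [← SetLike.coe_sort_coe, hset, Nat.card_coe_set_eq, Set.ncard_pair hne]

/-- The number of square classes of a local field. -/
theorem index_range_powMonoidHom_two_units [ProperSpace K] (h2 : (2 : K) ≠ 0)
    {r : ℝ} (hr : 0 < r) (hr2 : r < ‖(2 : K)‖) :
    (powMonoidHom 2 : Kˣ →* Kˣ).range.index =
      4 * (nsmulAddMonoidHom 2 :
        ballAddSubgroup K r hr.le →+ ballAddSubgroup K r hr.le).range.index := by
  have hr1 : r < 1 := hr2.trans_le norm_two_le_one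
  obtain ⟨ϖ, hϖ0, hϖ⟩ := NormedField.exists_norm_lt_one K
  have hinj : Function.Injective (powMonoidHom 2 : Multiplicative ℤ × unitBall K r hr.le hr1 →*
      Multiplicative ℤ × unitBall K r hr.le hr1) := by
    rintro ⟨a, x⟩ ⟨b, y⟩ h
    simp only [powMonoidHom_apply, Prod.pow_mk, Prod.mk.injEq] at h
    refine Prod.ext ?_ (injective_powMonoidHom_two_unitBall hr.le hr1 hr2 h.2)
    have := congrArg Multiplicative.toAdd h.1
    simp only [toAdd_pow] at this
    apply Multiplicative.toAdd.injective
    simpa using this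
  rw [index_range_powMonoidHom_two_of_injective
    ((zpowersHom Kˣ (Units.mk0 ϖ (norm_pos_iff.mp hϖ0))).coprod (unitBall K r hr.le hr1).subtype)
    (injective_zpowers_coprod_unitBall _ hϖ hr.le hr1)
    (index_range_zpowers_coprod_unitBall_ne_zero _ hϖ hr hr1) hinj,
    index_range_powMonoidHom_two_prod, index_range_powMonoidHom_two_int,
    index_range_powMonoidHom_unitBall h2 hr2, card_ker_powMonoidHom_two_units h2]
  ring

theorem eq_of_two_nsmul_eq {F : Type*} [Field F] (h2 : (2 : F) ≠ 0) {x y : F}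
    (h : 2 • x = 2 • y) : x = y := by
  simpa [two_nsmul, ← two_mul, h2] using h

theorem exists_index_ball_eq_sq [ProperSpace K] {E : Type*} [NontriviallyNormedField E]
    [IsUltrametricDist E] [ProperSpace E] [NormedAlgebra K E] (h2 : (2 : K) ≠ 0)
    (ψ : (K × K) ≃L[K] E) {R : ℝ} (hR : 0 < R) :
    ∃ (s : ℝ) (hs : 0 < s), s < ‖(2 : K)‖ ∧
      (nsmulAddMonoidHom 2 :
        ballAddSubgroup E R hR.le →+ ballAddSubgroup E R hR.le).range.index =
      (nsmulAddMonoidHom 2 :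
        ballAddSubgroup K s hs.le →+ ballAddSubgroup K s hs.le).range.index ^ 2 := by
  have h2pos : 0 < ‖(2 : K)‖ := norm_pos_iff.mpr h2
  obtain ⟨ε, hε, hball⟩ := Metric.nhds_basis_closedBall.mem_iff.mp
    (ψ.continuous.continuousAt.preimage_mem_nhds
      (by rw [map_zero]; exact closedBall_mem_nhds (0 : E) hR) :
        ψ ⁻¹' closedBall 0 R ∈ nhds (0 : K × K))
  have hs : 0 < min ε (‖(2 : K)‖ / 2) := by positivity
  refine ⟨min ε (‖(2 : K)‖ / 2), hs, (min_le_right _ _).trans_lt (by linarith), ?_⟩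
  set s := min ε (‖(2 : K)‖ / 2)
  have hE2 : (2 : E) ≠ 0 := by
    rw [← map_ofNat (algebraMap K E) 2]
    exact (map_ne_zero _).mpr h2
  have hmem (x : ballAddSubgroup K s hs.le × ballAddSubgroup K s hs.le) :
      ψ ((x.1 : K), (x.2 : K)) ∈ ballAddSubgroup E R hR.le := by
    have : ((x.1 : K), (x.2 : K)) ∈ closedBall (0 : K × K) ε := by
      rw [mem_closedBall_zero_iff, Prod.norm_def]
      exact max_le (x.1.2.trans (min_le_left _ _)) (x.2.2.trans (min_le_left _ _))
    simpa [mem_ballAddSubgroup] using hball this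
  let f : ballAddSubgroup K s hs.le × ballAddSubgroup K s hs.le →+ ballAddSubgroup E R hR.le :=
    { toFun x := ⟨ψ ((x.1 : K), (x.2 : K)), hmem x⟩
      map_zero' := by ext; exact map_zero ψ
      map_add' x y := by
        ext
        exact map_add ψ ((x.1 : K), (x.2 : K)) ((y.1 : K), (y.2 : K)) }
  have hf : Function.Injective f := by
    intro x y h
    have := ψ.injective (congrArg Subtype.val h)
    simp only [Prod.mk.injEq] at this
    exact Prod.ext (Subtype.ext this.1) (Subtype.ext this.2)
  have hfin : f.range.index ≠ 0 := by
    apply index_ne_zero_of_isOpen_ballAddSubgroup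
    have hopen : IsOpen (ψ.symm ⁻¹' (closedBall (0 : K) s ×ˢ closedBall (0 : K) s)) :=
      ((IsUltrametricDist.isOpen_closedBall _ hs.ne').prod
        (IsUltrametricDist.isOpen_closedBall _ hs.ne')).preimage ψ.symm.continuous
    convert hopen.preimage
      (continuous_subtype_val (p := fun x => x ∈ ballAddSubgroup E R hR.le)) using 1
    ext y
    simp only [SetLike.mem_coe, AddMonoidHom.mem_range, Set.mem_preimage, Set.mem_prod,
      mem_closedBall_zero_iff]
    constructor
    · rintro ⟨x, rfl⟩
      have : ψ.symm ((f x : ballAddSubgroup E R hR.le) : E) = ((x.1 : K), (x.2 : K)) :=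
        ψ.symm_apply_apply _
      rw [this]
      exact ⟨x.1.2, x.2.2⟩
    · rintro ⟨ha, hb⟩
      exact ⟨(⟨_, ha⟩, ⟨_, hb⟩), Subtype.ext (ψ.apply_symm_apply _)⟩
  have hB : Function.Injective (nsmulAddMonoidHom 2 :
      ballAddSubgroup K s hs.le × ballAddSubgroup K s hs.le →+ _) := by
    intro x y h
    simp only [nsmulAddMonoidHom_apply, Prod.ext_iff, Subtype.ext_iff] at h
    exact Prod.ext (Subtype.ext (eq_of_two_nsmul_eq h2 h.1)) (Subtype.ext (eq_of_two_nsmul_eq h2 h.2))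
  have hker : Nat.card (nsmulAddMonoidHom 2 :
      ballAddSubgroup E R hR.le →+ ballAddSubgroup E R hR.le).ker = 1 := by
    rw [AddSubgroup.card_eq_one, AddMonoidHom.ker_eq_bot_iff]
    intro x y h
    exact Subtype.ext (eq_of_two_nsmul_eq hE2 (congrArg Subtype.val h))
  rw [index_range_nsmulAddMonoidHom_two_of_injective f hf hfin hB, hker, mul_one,
    AddSubgroup.index_range_nsmulAddMonoidHom_two_prod, sq]

end LocalSquares
section Quadratic

variable {K E : Type*} [Field K] [Field E] [Algebra K E]

theorem card_algEquiv_eq_two (hKE : Module.finrank K E = 2) (τ : E ≃ₐ[K] E)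
    (hτ : τ ≠ AlgEquiv.refl) : Nat.card (E ≃ₐ[K] E) = 2 := by
  have : FiniteDimensional K E := Module.finite_of_finrank_eq_succ hKE
  have : Nontrivial (E ≃ₐ[K] E) := ⟨τ, AlgEquiv.refl, hτ⟩
  have h1 : Nat.card (E ≃ₐ[K] E) ≤ 2 := by
    rw [Nat.card_eq_fintype_card, ← hKE]
    exact AlgEquiv.card_le
  have h2 : 1 < Nat.card (E ≃ₐ[K] E) := Finite.one_lt_card
  omega

theorem isGalois_of_finrank_eq_two (hKE : Module.finrank K E = 2) (τ : E ≃ₐ[K] E)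
    (hτ : τ ≠ AlgEquiv.refl) : IsGalois K E := by
  have : FiniteDimensional K E := Module.finite_of_finrank_eq_succ hKE
  exact IsGalois.of_card_aut_eq_finrank K E
    ((card_algEquiv_eq_two hKE τ hτ).trans hKE.symm)

theorem involution_apply_apply (hKE : Module.finrank K E = 2) (τ : E ≃ₐ[K] E)
    (hτ : τ ≠ AlgEquiv.refl) (x : E) : τ (τ x) = x := by
  have h : τ ^ 2 = 1 := card_algEquiv_eq_two hKE τ hτ ▸ pow_card_eq_one'
  exact DFunLike.congr_fun ((sq τ).symm.trans h) x

theorem algebraMap_norm_eq_mul (hKE : Module.finrank K E = 2) (τ : E ≃ₐ[K] E)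
    (hτ : τ ≠ AlgEquiv.refl) (x : E) : algebraMap K E (Algebra.norm K x) = x * τ x := by
  classical
  have : FiniteDimensional K E := Module.finite_of_finrank_eq_succ hKE
  have := isGalois_of_finrank_eq_two hKE τ hτ
  have huniv : (Finset.univ : Finset (E ≃ₐ[K] E)) = {AlgEquiv.refl, τ} := by
    symm
    apply Finset.eq_univ_of_card
    rw [Finset.card_pair hτ.symm, ← Nat.card_eq_fintype_card, card_algEquiv_eq_two hKE τ hτ]
  rw [Algebra.norm_eq_prod_automorphisms, huniv, Finset.prod_pair hτ.symm]
  rfl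

theorem exists_algebraMap_eq_of_fixed (hKE : Module.finrank K E = 2) (τ : E ≃ₐ[K] E)
    (hτ : τ ≠ AlgEquiv.refl) {x : E} (hx : τ x = x) : ∃ a : K, algebraMap K E a = x := by
  have : FiniteDimensional K E := Module.finite_of_finrank_eq_succ hKE
  have := Subalgebra.isSimpleOrder_of_finrank_prime K E (hKE ▸ Nat.prime_two)
  rcases eq_bot_or_eq_top (AlgHom.equalizer (τ : E →ₐ[K] E) (AlgHom.id K E)) with h | h
  · have hmem : x ∈ AlgHom.equalizer (τ : E →ₐ[K] E) (AlgHom.id K E) := hx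
    rw [h] at hmem
    exact Algebra.mem_bot.mp hmem
  · refine absurd (AlgEquiv.ext fun y => ?_) hτ
    have hmem : y ∈ AlgHom.equalizer (τ : E →ₐ[K] E) (AlgHom.id K E) := h ▸ Algebra.mem_top
    exact hmem

theorem exists_ne_zero_apply_eq_neg (hKE : Module.finrank K E = 2) (τ : E ≃ₐ[K] E)
    (hτ : τ ≠ AlgEquiv.refl) : ∃ δ : E, δ ≠ 0 ∧ τ δ = -δ := by
  obtain ⟨x, hx⟩ : ∃ x, τ x ≠ x := by
    by_contra! h
    exact hτ (AlgEquiv.ext h)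
  exact ⟨x - τ x, sub_ne_zero.mpr hx.symm, by
    rw [map_sub, involution_apply_apply hKE τ hτ]; ring⟩

/-- Hilbert 90 in a quadratic extension, up to squares. -/
theorem exists_eq_algebraMap_mul_sq (hKE : Module.finrank K E = 2) (τ : E ≃ₐ[K] E)
    (hτ : τ ≠ AlgEquiv.refl) {x : E} {c : K} (hc : c ≠ 0)
    (hx : x * τ x = algebraMap K E c ^ 2) :
    ∃ (a : K) (y : E), a ≠ 0 ∧ y ≠ 0 ∧ x = algebraMap K E a * y ^ 2 := by
  set C := algebraMap K E c with hC
  have hC0 : C ≠ 0 := (map_ne_zero _).mpr hc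
  have hτC : τ C = C := τ.commutes c
  obtain ⟨y, hy0, hy⟩ : ∃ y : E, y ≠ 0 ∧ x * τ y = C * y := by
    by_cases h : C + x = 0
    · obtain ⟨δ, hδ0, hδ⟩ := exists_ne_zero_apply_eq_neg hKE τ hτ
      exact ⟨δ, hδ0, by rw [hδ]; linear_combination -δ * h⟩
    · exact ⟨C + x, h, by rw [map_add, hτC]; linear_combination hx⟩
  have hτy : τ y ≠ 0 := (map_ne_zero τ).mpr hy0
  obtain ⟨b, hb⟩ := exists_algebraMap_eq_of_fixed hKE τ hτ (x := y * τ y)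
    (by rw [map_mul, involution_apply_apply hKE τ hτ, mul_comm])
  have hb0 : b ≠ 0 := by
    rintro rfl
    rw [map_zero] at hb
    exact mul_ne_zero hy0 hτy hb.symm
  refine ⟨c / b, y, div_ne_zero hc hb0, hy0, ?_⟩
  rw [map_div₀, hb, ← hC]
  field_simp
  exact hy

theorem index_range_norm_units (hKE : Module.finrank K E = 2) (τ : E ≃ₐ[K] E)
    (hτ : τ ≠ AlgEquiv.refl)
    (hfin : (powMonoidHom 2 : Kˣ →* Kˣ).range.index ≠ 0)
    (hcard : 4 * (powMonoidHom 2 : Eˣ →* Eˣ).range.index =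
      (powMonoidHom 2 : Kˣ →* Kˣ).range.index ^ 2) (h2 : (2 : K) ≠ 0) :
    (Units.map (Algebra.norm K : E →* K)).range.index = 1 ∨
      (Units.map (Algebra.norm K : E →* K)).range.index = 2 := by
  have hE2 : (2 : E) ≠ 0 := by
    rw [← map_ofNat (algebraMap K E) 2]
    exact (map_ne_zero _).mpr h2
  obtain ⟨δ, hδ0, hδ⟩ := exists_ne_zero_apply_eq_neg hKE τ hτ
  obtain ⟨d, hd⟩ := exists_algebraMap_eq_of_fixed hKE τ hτ (x := δ ^ 2)
    (by rw [map_pow, hδ, neg_sq])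
  have hd0 : d ≠ 0 := by
    rintro rfl
    rw [map_zero] at hd
    exact pow_ne_zero 2 hδ0 hd.symm
  refine index_range_norm (Units.map (algebraMap K E : K →* E))
    (Units.map (Algebra.norm K : E →* K)) ?_ ?_ (Units.mk0 d hd0) ?_ ?_ hfin hcard
  · intro a
    ext
    simp [Algebra.norm_algebraMap, hKE]
  · intro x c h
    have h1 : Algebra.norm K (x : E) = (c : K) ^ 2 := by
      simpa using congrArg (fun u : Kˣ => (u : K)) h
    have h3 := algebraMap_norm_eq_mul hKE τ hτ (x : E)
    rw [h1, map_pow] at h3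
    obtain ⟨a, y, ha, hy, hxy⟩ := exists_eq_algebraMap_mul_sq hKE τ hτ c.ne_zero h3.symm
    refine ⟨Units.mk0 a ha, Units.mk0 y hy, ?_⟩
    ext
    simpa using hxy
  · intro a ha
    have h1 : d = (a : K) ^ 2 := by
      simpa using congrArg (fun u : Kˣ => (u : K)) ha
    rw [h1, map_pow] at hd
    have hfix : τ δ = δ := by
      rcases sq_eq_sq_iff_eq_or_eq_neg.mp hd.symm with h | h <;> rw [h] <;> simp
    rw [hδ] at hfix
    exact mul_ne_zero hE2 hδ0 (by linear_combination -hfix)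
  · refine ⟨Units.mk0 δ hδ0, ?_⟩
    ext
    simpa using hd

/-- If the norm group has index at most two and `-1` is a sum of squares, then every binary
Hermitian form is universal. -/
theorem exists_mul_norm_add_mul_norm_eq (hKE : Module.finrank K E = 2) (h2 : (2 : K) ≠ 0)
    (hidx : (Units.map (Algebra.norm K : E →* K)).range.index = 1 ∨
      (Units.map (Algebra.norm K : E →* K)).range.index = 2)
    (hneg : ∃ (n : ℕ) (s : K), s ≠ 0 ∧ (n : K) = -s ^ 2)
    {α β a : K} (hα : α ≠ 0) (hβ : β ≠ 0) (ha : a ≠ 0) :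
    ∃ x y : E, α * Algebra.norm K x + β * Algebra.norm K y = a := by
  set N : K → Prop := fun b => ∃ x : E, Algebra.norm K x = b
  have hmul {b c : K} : N b → N c → N (b * c) := by
    rintro ⟨x, rfl⟩ ⟨y, rfl⟩
    exact ⟨x * y, map_mul _ _ _⟩
  have hsq (b : K) : N (b ^ 2) := ⟨algebraMap K E b, by rw [Algebra.norm_algebraMap, hKE]⟩
  have hN0 : N 0 := by simpa using hsq 0
  have hN1 : N 1 := by simpa using hsq 1
  have hmem {b : K} (hb : b ≠ 0) :
      Units.mk0 b hb ∈ (Units.map (Algebra.norm K : E →* K)).range → N b := by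
    rintro ⟨x, hx⟩
    exact ⟨x, congrArg (fun u : Kˣ => (u : K)) hx⟩
  have hmem' {b : K} (hb : b ≠ 0) :
      N b → Units.mk0 b hb ∈ (Units.map (Algebra.norm K : E →* K)).range := by
    rintro ⟨x, hx⟩
    have hx0 : x ≠ 0 := by
      rintro rfl
      have : FiniteDimensional K E := Module.finite_of_finrank_eq_succ hKE
      rw [Algebra.norm_zero] at hx
      exact hb hx.symm
    exact ⟨Units.mk0 x hx0, by ext; simpa using hx⟩
  have hmulnot {b c : K} (hb : ¬ N b) (hc : ¬ N c) : N (b * c) := by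
    have hb0 : b ≠ 0 := by rintro rfl; exact hb hN0
    have hc0 : c ≠ 0 := by rintro rfl; exact hc hN0
    apply hmem (mul_ne_zero hb0 hc0)
    rw [Units.mk0_mul]
    rcases hidx with h | h
    · rw [Subgroup.index_eq_one.mp h]; exact Subgroup.mem_top _
    · rw [Subgroup.mul_mem_iff_of_index_two h]
      exact iff_of_false (fun h => hb (hmem hb0 h)) (fun h => hc (hmem hc0 h))
  have hdiv {b c : K} (hc : c ≠ 0) (h : N (b * c)) : N (b / c) := by
    have := hmul h (hsq c⁻¹)
    rwa [show b * c * c⁻¹ ^ 2 = b / c by field_simp] at this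
  have hsum (b : K) : ∃ u v : K, N u ∧ N v ∧ u + v = b := by
    by_cases hm1 : N (-1)
    · exact ⟨((b + 1) / 2) ^ 2, -1 * ((b - 1) / 2) ^ 2, hsq _, hmul hm1 (hsq _), by
        field_simp; ring⟩
    · obtain ⟨u, v, hu, hv, huv⟩ : ∃ u v, N u ∧ N v ∧ ¬ N (u + v) := by
        by_contra! hadd
        obtain ⟨n, s, hs, hn⟩ := hneg
        have hnat (k : ℕ) : N k := by
          induction k with
          | zero => simpa using hN0
          | succ k ih => push_cast; exact hadd _ _ ih hN1
        have := hmul (hnat n) (hsq s⁻¹)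
        rw [hn, show -s ^ 2 * s⁻¹ ^ 2 = -1 by field_simp] at this
        exact hm1 this
      by_cases hb : N b
      · exact ⟨b, 0, hb, hN0, add_zero b⟩
      · have huv0 : u + v ≠ 0 := by intro h; rw [h] at huv; exact huv hN0
        have hq := hdiv huv0 (hmulnot hb huv)
        exact ⟨b / (u + v) * u, b / (u + v) * v, hmul hq hu, hmul hq hv, by field_simp⟩
  obtain ⟨u, v, ⟨x, rfl⟩, ⟨y, rfl⟩, huv⟩ : ∃ u v, N u ∧ N v ∧ α * u + β * v = a := by
    by_cases h1 : N (a * α)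
    · exact ⟨a / α, 0, hdiv hα h1, hN0, by field_simp; simp⟩
    by_cases h3 : N (a * β)
    · exact ⟨0, a / β, hN0, hdiv hβ h3, by field_simp; simp⟩
    have h4 : N (α / β) := by
      have := hmul (hmulnot h1 h3) (hsq (a⁻¹ * β⁻¹))
      rwa [show a * α * (a * β) * (a⁻¹ * β⁻¹) ^ 2 = α / β by field_simp] at this
    obtain ⟨u, v, hu, hv, huv⟩ := hsum (a / α)
    refine ⟨u, α / β * v, hu, hmul h4 hv, ?_⟩
    rw [show β * (α / β * v) = α * v by field_simp, ← mul_add, huv]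
    field_simp
  exact ⟨x, y, huv⟩

end Quadratic

section Padic

theorem exists_natCast_eq_neg_sq_padic (p : ℕ) [Fact p.Prime] :
    ∃ (n : ℕ) (s : ℚ_[p]), s ≠ 0 ∧ (n : ℚ_[p]) = -s ^ 2 := by
  have h2 : (2 : ℚ_[p]) ≠ 0 := two_ne_zero
  have h2pos : 0 < ‖(2 : ℚ_[p])‖ := norm_pos_iff.mpr h2
  obtain ⟨k, hk⟩ := exists_pow_lt_of_lt_one
    (show 0 < ‖(2 : ℚ_[p])‖ * (‖(2 : ℚ_[p])‖ / 2) by positivity) (Padic.norm_p_lt_one (p := p))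
  obtain ⟨w, -, hw⟩ := exists_sq_eq_one_add h2 (r := ‖(2 : ℚ_[p])‖ / 2) (by linarith)
    (u := -(p : ℚ_[p]) ^ (k + 1)) (by
      rw [norm_neg, norm_pow, pow_succ]
      have := Padic.norm_p_lt_one (p := p)
      have := pow_nonneg (norm_nonneg (p : ℚ_[p])) k
      nlinarith)
  have hp : 1 < p ^ (k + 1) := Nat.one_lt_pow (by omega) (Fact.out : p.Prime).one_lt
  have hn : ((p ^ (k + 1) - 1 : ℕ) : ℚ_[p]) = -(1 + w) ^ 2 := by
    rw [hw, Nat.cast_sub hp.le]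
    push_cast
    ring
  refine ⟨p ^ (k + 1) - 1, 1 + w, ?_, hn⟩
  intro h
  rw [h] at hn
  simp only [ne_eq, OfNat.ofNat_ne_zero, not_false_eq_true, zero_pow, neg_zero,
    Nat.cast_eq_zero] at hn
  omega

theorem index_range_norm_units_of_local {K E : Type*} [NontriviallyNormedField K]
    [IsUltrametricDist K] [ProperSpace K] [Field E] [Algebra K E] (h2 : (2 : K) ≠ 0)
    (hKE : Module.finrank K E = 2) (τ : E ≃ₐ[K] E) (hτ : τ ≠ AlgEquiv.refl) :
    (Units.map (Algebra.norm K : E →* K)).range.index = 1 ∨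
      (Units.map (Algebra.norm K : E →* K)).range.index = 2 := by
  have : FiniteDimensional K E := Module.finite_of_finrank_eq_succ hKE
  let : NontriviallyNormedField E := spectralNorm.nontriviallyNormedField K E
  let : NormedAlgebra K E := spectralNorm.normedAlgebra K E
  have : IsUltrametricDist E := IsUltrametricDist.of_normedAlgebra K
  have : ProperSpace E := FiniteDimensional.proper K E
  have hE2 : (2 : E) ≠ 0 := by
    rw [← map_ofNat (algebraMap K E) 2]
    exact (map_ne_zero _).mpr h2
  have hE2pos : 0 < ‖(2 : E)‖ := norm_pos_iff.mpr hE2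
  let ψ : (K × K) ≃L[K] E :=
    (LinearEquiv.ofFinrankEq (K × K) E (by simp [hKE])).toContinuousLinearEquiv
  have hR : 0 < ‖(2 : E)‖ / 2 := by positivity
  obtain ⟨s, hs, hs2, hidx⟩ := exists_index_ball_eq_sq h2 ψ hR
  have hK := index_range_powMonoidHom_two_units h2 hs hs2
  have hE := index_range_powMonoidHom_two_units hE2 hR (by linarith)
  refine index_range_norm_units hKE τ hτ ?_ ?_ h2
  · rw [hK]
    exact mul_ne_zero four_ne_zero (index_range_nsmul_ballAddSubgroup_ne_zero h2 hs)
  · rw [hE, hK, hidx]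
    ring

theorem exists_mul_norm_add_mul_norm_eq_padic (p : ℕ) [Fact p.Prime]
    {K : Type*} [Field K] [Algebra ℚ_[p] K] [FiniteDimensional ℚ_[p] K]
    {E : Type*} [Field E] [Algebra K E] (hKE : Module.finrank K E = 2)
    (τ : E ≃ₐ[K] E) (hτ : τ ≠ AlgEquiv.refl)
    {α β a : K} (hα : α ≠ 0) (hβ : β ≠ 0) (ha : a ≠ 0) :
    ∃ x y : E, α * Algebra.norm K x + β * Algebra.norm K y = a := by
  have h2 : (2 : K) ≠ 0 := by
    rw [← map_ofNat (algebraMap ℚ_[p] K) 2]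
    exact (map_ne_zero _).mpr two_ne_zero
  refine exists_mul_norm_add_mul_norm_eq hKE h2 ?_ ?_ hα hβ ha
  · let : NontriviallyNormedField K := spectralNorm.nontriviallyNormedField ℚ_[p] K
    let : NormedAlgebra ℚ_[p] K := spectralNorm.normedAlgebra ℚ_[p] K
    have : IsUltrametricDist K := IsUltrametricDist.of_normedAlgebra ℚ_[p]
    have : ProperSpace K := FiniteDimensional.proper ℚ_[p] K
    exact index_range_norm_units_of_local h2 hKE τ hτ
  · obtain ⟨n, s, hs, hn⟩ := exists_natCast_eq_neg_sq_padic p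
    exact ⟨n, algebraMap ℚ_[p] K s, (map_ne_zero _).mpr hs, by
      rw [← map_pow, ← map_neg, ← hn, map_natCast]⟩

end Padic
section Hermitian

variable {K E V : Type*} [Field K] [Field E] [Algebra K E] [AddCommGroup V] [Module E V]

/-- `φ` is a nondegenerate Hermitian form with respect to `τ`. -/
structure IsNondegHermitian (τ : E ≃ₐ[K] E) (φ : V → V → E) : Prop where
  add_left : ∀ u v w : V, φ (u + v) w = φ u w + φ v w
  smul_left : ∀ (a : E) (v w : V), φ (a • v) w = a * φ v w
  herm : ∀ v w : V, φ v w = τ (φ w v)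
  nondeg : ∀ v : V, (∀ w : V, φ v w = 0) → v = 0

namespace IsNondegHermitian

variable {τ : E ≃ₐ[K] E} {φ : V → V → E}

theorem add_right (h : IsNondegHermitian τ φ) (u v w : V) : φ u (v + w) = φ u v + φ u w := by
  rw [h.herm, h.add_left, map_add, ← h.herm, ← h.herm]

theorem smul_right (h : IsNondegHermitian τ φ) (a : E) (v w : V) : φ v (a • w) = τ a * φ v w := by
  rw [h.herm, h.smul_left, map_mul, ← h.herm]

/-- The linear functional `v ↦ φ v w`. -/
def left (h : IsNondegHermitian τ φ) (w : V) : V →ₗ[E] E where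
  toFun v := φ v w
  map_add' u v := h.add_left u v w
  map_smul' a v := h.smul_left a v w

theorem left_apply (h : IsNondegHermitian τ φ) (v w : V) : h.left w v = φ v w := rfl

theorem restrict_ker_left (h : IsNondegHermitian τ φ) {v : V} (hv : φ v v ≠ 0) :
    IsNondegHermitian τ (fun x y : LinearMap.ker (h.left v) => φ x y) where
  add_left u v w := h.add_left u v w
  smul_left a v w := h.smul_left a v w
  herm v w := h.herm v w
  nondeg := by
    rintro ⟨w, hw⟩ hperp
    rw [LinearMap.mem_ker, left_apply] at hw
    refine Subtype.ext (h.nondeg w fun x => ?_)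
    set c := φ x v / φ v v
    have hmem : x - c • v ∈ LinearMap.ker (h.left v) := by
      rw [LinearMap.mem_ker, map_sub, map_smul, left_apply, left_apply, smul_eq_mul]
      simp only [c]
      field_simp
      ring
    have h1 : φ w (x - c • v) = 0 := hperp ⟨_, hmem⟩
    have h3 := h.add_right w (x - c • v) (c • v)
    rwa [sub_add_cancel, h1, h.smul_right, hw, mul_zero, add_zero] at h3

theorem finrank_ker_left (h : IsNondegHermitian τ φ) {v : V} (hv : φ v v ≠ 0) {n : ℕ}
    (hn : Module.finrank E V = n + 1) : Module.finrank E (LinearMap.ker (h.left v)) = n := by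
  have : FiniteDimensional E V := Module.finite_of_finrank_eq_succ hn
  have h1 := (h.left v).finrank_range_add_finrank_ker
  have hsurj : Function.Surjective (h.left v) := by
    apply LinearMap.surjective
    intro h0
    exact hv (by rw [← h.left_apply, h0, LinearMap.zero_apply])
  rw [LinearMap.range_eq_top.mpr hsurj, finrank_top, Module.finrank_self, hn] at h1
  omega

theorem exists_self_ne_zero (h : IsNondegHermitian τ φ) (h2 : (2 : E) ≠ 0) {n : ℕ}
    (hn : Module.finrank E V = n + 1) : ∃ v, φ v v ≠ 0 := by
  by_contra! hzero
  have : Nontrivial V := Module.nontrivial_of_finrank_eq_succ hn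
  obtain ⟨v, hv⟩ := exists_ne (0 : V)
  obtain ⟨w, hw⟩ : ∃ w, φ v w ≠ 0 := by
    by_contra! hw
    exact hv (h.nondeg v hw)
  have h1 := hzero ((φ v w)⁻¹ • v + w)
  rw [h.add_left, h.add_right, h.add_right, hzero, hzero, h.smul_left, h.herm w, h.smul_left,
    inv_mul_cancel₀ hw, map_one] at h1
  exact h2 (by linear_combination h1)

theorem exists_self_eq_algebraMap (hKE : Module.finrank K E = 2) (hτ : τ ≠ AlgEquiv.refl)
    (h : IsNondegHermitian τ φ) (h2 : (2 : E) ≠ 0) {n : ℕ}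
    (hn : Module.finrank E V = n + 1) : ∃ v, ∃ a : K, a ≠ 0 ∧ φ v v = algebraMap K E a := by
  obtain ⟨v, hv⟩ := h.exists_self_ne_zero h2 hn
  obtain ⟨a, ha⟩ := exists_algebraMap_eq_of_fixed hKE τ hτ (h.herm v v).symm
  refine ⟨v, a, ?_, ha.symm⟩
  rintro rfl
  exact hv (by rw [← ha, map_zero])

/-- In dimension at least two, universality of binary forms lets us represent everything. -/
theorem exists_self_eq (hKE : Module.finrank K E = 2) (hτ : τ ≠ AlgEquiv.refl)
    (huniv : ∀ α β a : K, α ≠ 0 → β ≠ 0 → a ≠ 0 →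
      ∃ x y : E, α * Algebra.norm K x + β * Algebra.norm K y = a)
    (h : IsNondegHermitian τ φ) (h2 : (2 : E) ≠ 0) {n : ℕ}
    (hn : Module.finrank E V = n + 2) {a : K} (ha : a ≠ 0) : ∃ v, φ v v = algebraMap K E a := by
  obtain ⟨v, α, hα, hv⟩ := h.exists_self_eq_algebraMap hKE hτ h2 hn
  have hv0 : φ v v ≠ 0 := by rw [hv]; exact (map_ne_zero _).mpr hα
  obtain ⟨⟨w, hwv⟩, β, hβ, hw⟩ := (h.restrict_ker_left hv0).exists_self_eq_algebraMap hKE hτ h2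
    (h.finrank_ker_left hv0 hn)
  obtain ⟨x, y, hxy⟩ := huniv α β a hα hβ ha
  have hwv : φ w v = 0 := hwv
  have hvw : φ v w = 0 := by rw [h.herm, hwv, map_zero]
  refine ⟨x • v + y • w, ?_⟩
  simp only at hw
  rw [← hxy, map_add, map_mul, map_mul, algebraMap_norm_eq_mul hKE τ hτ,
    algebraMap_norm_eq_mul hKE τ hτ]
  simp only [h.add_left, h.add_right, h.smul_left, h.smul_right, hwv, hvw, hv, hw]
  ring

theorem gram_cons (h : IsNondegHermitian τ φ) {n : ℕ} {b : Fin n → V} {D : E}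
    (hb : ∀ i j, φ (b i) (b j) = if i = j then D else 0) {v : V} (hv : φ v v = D)
    (hvb : ∀ i, φ v (b i) = 0) (i j : Fin (n + 1)) :
    φ (Fin.cons (α := fun _ => V) v b i) (Fin.cons (α := fun _ => V) v b j) =
      if i = j then D else 0 := by
  refine Fin.cases ?_ (fun i => ?_) i <;> refine Fin.cases ?_ (fun j => ?_) j
  · simpa using hv
  · simpa [(Fin.succ_ne_zero j).symm] using hvb j
  · have : φ (b i) v = 0 := by rw [h.herm, hvb, map_zero]
    simpa using this
  · simpa using hb i j

/-- An odd-dimensional nondegenerate Hermitian form is a multiple of the standard one. -/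
theorem exists_gram_eq_scalar (hKE : Module.finrank K E = 2) (hτ : τ ≠ AlgEquiv.refl)
    (huniv : ∀ α β a : K, α ≠ 0 → β ≠ 0 → a ≠ 0 →
      ∃ x y : E, α * Algebra.norm K x + β * Algebra.norm K y = a)
    (h2 : (2 : E) ≠ 0) (m : ℕ) (h : IsNondegHermitian τ φ)
    (hm : Module.finrank E V = 2 * m + 1) :
    ∃ d : K, d ≠ 0 ∧ ∃ b : Fin (2 * m + 1) → V,
      ∀ i j, φ (b i) (b j) = if i = j then algebraMap K E d else 0 := by
  induction m generalizing V with
  | zero =>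
    obtain ⟨v, d, hd, hv⟩ := h.exists_self_eq_algebraMap hKE hτ h2 hm
    refine ⟨d, hd, fun _ => v, fun i j => ?_⟩
    rw [if_pos (Subsingleton.elim (α := Fin 1) i j), hv]
  | succ m ih =>
    obtain ⟨v, hv⟩ := h.exists_self_eq hKE hτ huniv h2 (n := 2 * m + 1) hm one_ne_zero
    rw [map_one] at hv
    have hv0 : φ v v ≠ 0 := by rw [hv]; exact one_ne_zero
    have h' := h.restrict_ker_left hv0
    have hm' := h.finrank_ker_left hv0 (n := 2 * m + 2) hm
    obtain ⟨w, hw⟩ := h'.exists_self_eq hKE hτ huniv h2 (n := 2 * m) hm' one_ne_zero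
    rw [map_one] at hw
    have hw0 : φ (w : V) (w : V) ≠ 0 := by rw [hw]; exact one_ne_zero
    obtain ⟨d, hd, b, hb⟩ := ih (h'.restrict_ker_left hw0) (h'.finrank_ker_left hw0 hm')
    have hwv : φ (w : V) v = 0 := w.2
    have hvw : φ v (w : V) = 0 := by rw [h.herm, hwv, map_zero]
    have hvb (i) : φ v (b i : V) = 0 := by
      have : φ (b i : V) v = 0 := (b i : LinearMap.ker (h.left v)).2
      rw [h.herm, this, map_zero]
    have hwb (i) : φ (w : V) (b i : V) = 0 := by
      have : φ (b i : V) (w : V) = 0 := (b i).2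
      rw [h.herm, this, map_zero]
    obtain ⟨x, y, hxy⟩ := huniv 1 1 d one_ne_zero one_ne_zero hd
    have hxy' : x * τ x + y * τ y = algebraMap K E d := by
      rw [← hxy, one_mul, one_mul, map_add, algebraMap_norm_eq_mul hKE τ hτ,
        algebraMap_norm_eq_mul hKE τ hτ]
    have hinv := involution_apply_apply hKE τ hτ
    refine ⟨d, hd, Fin.cons (x • v + y • (w : V))
      (Fin.cons (-τ y • v + τ x • (w : V)) fun i => (b i : V)), ?_⟩
    refine h.gram_cons (h.gram_cons hb ?_ fun i => ?_) ?_ fun i => ?_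
    · simp only [h.add_left, h.add_right, h.smul_left, h.smul_right, hwv, hvw, hv, hw, map_neg,
        hinv]
      linear_combination hxy'
    · simp only [h.add_left, h.smul_left, hvb, hwb]
      ring
    · simp only [h.add_left, h.add_right, h.smul_left, h.smul_right, hwv, hvw, hv, hw]
      linear_combination hxy'
    · refine Fin.cases ?_ (fun i => ?_) i
      · simp only [Fin.cons_zero, h.add_left, h.add_right, h.smul_left, h.smul_right, hwv, hvw, hv,
          hw, map_neg, hinv]
        ring
      · simp only [Fin.cons_succ, h.add_left, h.smul_left, hvb, hwb]
        ring

/-- An orthogonal basis on which the form is constant expresses the form in coordinates. -/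
theorem exists_basis_form_eq (h : IsNondegHermitian τ φ) {n : ℕ} [NeZero n]
    (hn : Module.finrank E V = n) {D : E} (hD : D ≠ 0) {b : Fin n → V}
    (hb : ∀ i j, φ (b i) (b j) = if i = j then D else 0) :
    ∃ B : Module.Basis (Fin n) E V,
      ∀ v w, φ v w = D * ∑ i, B.repr v i * τ (B.repr w i) := by
  have hcoord (c : Fin n → E) (j : Fin n) : φ (∑ i, c i • b i) (b j) = c j * D := by
    rw [← h.left_apply, map_sum]
    simp [h.left_apply, h.smul_left, hb]
  have hli : LinearIndependent E b := by
    rw [Fintype.linearIndependent_iff]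
    intro c hc j
    have h1 := hcoord c j
    rw [hc, ← h.left_apply, map_zero] at h1
    exact (mul_eq_zero.mp h1.symm).resolve_right hD
  refine ⟨basisOfLinearIndependentOfCardEqFinrank hli (by simp [hn]), fun v w => ?_⟩
  set B := basisOfLinearIndependentOfCardEqFinrank hli (by simp [hn])
  have hB (i) : B i = b i := by simp [B]
  have hcoef (u : V) (j) : φ u (b j) = B.repr u j * D := by
    rw [← hcoord, ← Finset.sum_congr rfl fun i _ => congrArg (B.repr u i • ·) (hB i), B.sum_repr]
  have hτD : τ D = D := by
    have i : Fin n := 0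
    have h1 := h.herm (b i) (b i)
    rw [hb, if_pos rfl] at h1
    exact h1.symm
  calc φ v w = τ (φ w v) := h.herm v w
    _ = τ (∑ i, B.repr w i * φ (b i) v) := by
      conv_lhs => rw [← B.sum_repr w, ← h.left_apply, map_sum]
      simp [h.left_apply, h.smul_left, hB]
    _ = D * ∑ i, B.repr v i * τ (B.repr w i) := by
      rw [map_sum, Finset.mul_sum]
      refine Finset.sum_congr rfl fun i _ => ?_
      rw [map_mul, ← h.herm, hcoef]
      ring

end IsNondegHermitian

end Hermitian

/-- Let `K` be a finite extension of `ℚ_p`, `E/K` quadratic with nontrivial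
`K`-automorphism `τ`, and let `(V, φ)`, `(V', φ')` be nondegenerate Hermitian spaces over `E`
of the same odd dimension `2m + 1`.  Then there is an `E`-linear isomorphism `g : V → V'`
such that conjugation `f ↦ g ∘ f ∘ g⁻¹` carries `U(V, φ)` onto `U(V', φ')`.  -/
theorem stmt_4 (p : ℕ) [Fact p.Prime]
    {K : Type*} [Field K] [Algebra ℚ_[p] K] [FiniteDimensional ℚ_[p] K]
    {E : Type*} [Field E] [Algebra K E] (hKE : Module.finrank K E = 2)
    (τ : E ≃ₐ[K] E) (hτ : τ ≠ AlgEquiv.refl)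
    (m : ℕ)
    {V : Type*} [AddCommGroup V] [Module E V] (hV : Module.finrank E V = 2 * m + 1)
    {V' : Type*} [AddCommGroup V'] [Module E V'] (hV' : Module.finrank E V' = 2 * m + 1)
    (φ : V → V → E) (φ' : V' → V' → E)
    (hadd : ∀ u v w : V, φ (u + v) w = φ u w + φ v w)
    (hsmul : ∀ (a : E) (v w : V), φ (a • v) w = a * φ v w)
    (hherm : ∀ v w : V, φ v w = τ (φ w v))
    (hnd : ∀ v : V, (∀ w : V, φ v w = 0) → v = 0)
    (hadd' : ∀ u v w : V', φ' (u + v) w = φ' u w + φ' v w)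
    (hsmul' : ∀ (a : E) (v w : V'), φ' (a • v) w = a * φ' v w)
    (hherm' : ∀ v w : V', φ' v w = τ (φ' w v))
    (hnd' : ∀ v : V', (∀ w : V', φ' v w = 0) → v = 0) :
    ∃ g : V ≃ₗ[E] V', ∀ f : V ≃ₗ[E] V,
      (∀ v w : V, φ (f v) (f w) = φ v w) ↔
        (∀ v w : V', φ' ((g.symm.trans (f.trans g)) v) ((g.symm.trans (f.trans g)) w)
          = φ' v w) := by
  have h2 : (2 : E) ≠ 0 := by
    rw [← map_ofNat ((algebraMap K E).comp (algebraMap ℚ_[p] K)) 2]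
    exact (map_ne_zero _).mpr two_ne_zero
  have h : IsNondegHermitian τ φ := ⟨hadd, hsmul, hherm, hnd⟩
  have h' : IsNondegHermitian τ φ' := ⟨hadd', hsmul', hherm', hnd'⟩
  have huniv (α β a : K) (hα : α ≠ 0) (hβ : β ≠ 0) (ha : a ≠ 0) :=
    exists_mul_norm_add_mul_norm_eq_padic p hKE τ hτ hα hβ ha
  obtain ⟨d, hd, b, hb⟩ := h.exists_gram_eq_scalar hKE hτ huniv h2 m hV
  obtain ⟨d', hd', b', hb'⟩ := h'.exists_gram_eq_scalar hKE hτ huniv h2 m hV'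
  have hD : algebraMap K E d ≠ 0 := (map_ne_zero _).mpr hd
  have hD' : algebraMap K E d' ≠ 0 := (map_ne_zero _).mpr hd'
  obtain ⟨B, hB⟩ := h.exists_basis_form_eq hV hD hb
  obtain ⟨B', hB'⟩ := h'.exists_basis_form_eq hV' hD' hb'
  set g : V ≃ₗ[E] V' := B.equiv B' (Equiv.refl _)
  have hrepr (v : V) (i) : B'.repr (g v) i = B.repr v i := by
    simp [g, Module.Basis.equiv]
  have hg (v w : V) :
      φ' (g v) (g w) = algebraMap K E d' / algebraMap K E d * φ v w := by
    rw [hB', hB]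
    simp only [hrepr]
    field_simp
  have hc : algebraMap K E d' / algebraMap K E d ≠ 0 := div_ne_zero hD' hD
  refine ⟨g, fun f => ⟨fun hf v w => ?_, fun hf v w => ?_⟩⟩
  · obtain ⟨v, rfl⟩ := g.surjective v
    obtain ⟨w, rfl⟩ := g.surjective w
    simp only [LinearEquiv.trans_apply, LinearEquiv.symm_apply_apply, hg, hf]
  · have h1 := hf (g v) (g w)
    simp only [LinearEquiv.trans_apply, LinearEquiv.symm_apply_apply, hg] at h1
    exact mul_left_cancel₀ hc h1
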